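/- Let G be a simple graph on n vertices and let Ḡ be its complement. Then n⁺(G) + n⁺(Ḡ) ≤ n + 1. -/

import Mathlib

/-!
The number of positive eigenvalues of a real symmetric matrix is the positive index of its quadratic
form: the largest dimension of a subspace on which the form is positive definite. Intersecting
optimal subspaces for `P` and `Q` gives a subspace of dimension at least
`sigPos P + sigPos Q - dim M` on which `P + Q` is positive definite. The forms of a graph and its
complement add up to `(∑ xᵢ)² - ∑ xᵢ²`, which is nonpositive on the hyperplane `∑ xᵢ = 0`, so
the positive index of the sum is at most `1`.
-/

open Matrix

/-- The adjacency matrix of a simple graph, viewed over `ℝ`, is Hermitian. -/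
lemma SimpleGraph.adjMatrix_isHermitian {n : ℕ} (G : SimpleGraph (Fin n))
    [DecidableRel G.Adj] : (G.adjMatrix ℝ).IsHermitian := by
  rw [Matrix.IsHermitian, conjTranspose_eq_transpose_of_trivial]
  exact G.isSymm_adjMatrix

/-- `n⁺(G)`: the number of positive eigenvalues (with multiplicity) of the adjacency
matrix of `G`. -/
noncomputable def SimpleGraph.posInertia {n : ℕ} (G : SimpleGraph (Fin n)) : ℕ :=
  letI := Classical.decRel G.Adj
  (Finset.univ.filter fun i => 0 < G.adjMatrix_isHermitian.eigenvalues i).card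

/-- `n⁰(G)`: the number of zero eigenvalues (with multiplicity) of the adjacency
matrix of `G`. -/
noncomputable def SimpleGraph.zeroInertia {n : ℕ} (G : SimpleGraph (Fin n)) : ℕ :=
  letI := Classical.decRel G.Adj
  (Finset.univ.filter fun i => G.adjMatrix_isHermitian.eigenvalues i = 0).card

/-- `n⁻(G)`: the number of negative eigenvalues (with multiplicity) of the adjacency
matrix of `G`. -/
noncomputable def SimpleGraph.negInertia {n : ℕ} (G : SimpleGraph (Fin n)) : ℕ :=
  letI := Classical.decRel G.Adj
  (Finset.univ.filter fun i => G.adjMatrix_isHermitian.eigenvalues i < 0).card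

section Signature

variable {K M : Type*} [Field K] [LinearOrder K] [AddCommGroup M] [Module K M]
  [FiniteDimensional K M]

lemma sigPos_add_sigPos_le_finrank_add_sigPos_add [IsOrderedAddMonoid K]
    (P Q : QuadraticForm K M) : sigPos P + sigPos Q ≤ Module.finrank K M + sigPos (P + Q) := by
  obtain ⟨V, hV, hP⟩ := exists_finrank_eq_sigPos_and_posDef P
  obtain ⟨W, hW, hQ⟩ := exists_finrank_eq_sigPos_and_posDef Q
  have hPQ : ((P + Q).restrict (V ⊓ W)).PosDef := fun x hx ↦
    add_pos (hP ⟨x, x.2.1⟩ (by simpa using hx)) (hQ ⟨x, x.2.2⟩ (by simpa using hx))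
  calc
    sigPos P + sigPos Q = Module.finrank K ↥(V ⊔ W) + Module.finrank K ↥(V ⊓ W) := by
      rw [Submodule.finrank_sup_add_finrank_inf_eq, hV, hW]
    _ ≤ Module.finrank K M + sigPos (P + Q) :=
      add_le_add (Submodule.finrank_le _) (le_sigPos_of_posDef _ hPQ)

lemma sigPos_le_finrank_range_of_nonpos_on_ker {N : Type*} [AddCommGroup N] [Module K N]
    {Q : QuadraticForm K M} (f : M →ₗ[K] N) (hQ : ∀ x ∈ f.ker, Q x ≤ 0) :
    sigPos Q ≤ Module.finrank K f.range := by
  refine Nat.le_of_add_le_add_right (b := Module.finrank K f.ker) ?_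
  rw [f.finrank_range_add_finrank_ker]
  exact QuadraticForm.sigPos_add_finrank_le_of_nonpos hQ

end Signature

section QuadraticFormOfMatrix

variable {ι : Type*} [Fintype ι] [DecidableEq ι]

lemma toQuadraticForm'_apply {R : Type*} [CommRing R] (A : Matrix ι ι R) (x : ι → R) :
    A.toQuadraticForm' x = x ⬝ᵥ A *ᵥ x :=
  toLinearMap₂'_apply' A x x

lemma equivalent_weightedSumSquares_eigenvalues {A : Matrix ι ι ℝ} (hA : A.IsHermitian) :
    A.toQuadraticForm'.Equivalent (QuadraticMap.weightedSumSquares ℝ hA.eigenvalues) := by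
  let U : Matrix ι ι ℝ := hA.eigenvectorUnitary
  have hdiag : Uᵀ * A * U = diagonal hA.eigenvalues := by
    simpa [U, star_eq_conjTranspose, Function.comp_def]
      using hA.conjStarAlgAut_star_eigenvectorUnitary
  refine QuadraticMap.Equivalent.symm
    ⟨⟨UnitaryGroup.toLinearEquiv hA.eigenvectorUnitary, fun x ↦ ?_⟩⟩
  calc
    A.toQuadraticForm' (U *ᵥ x) = x ⬝ᵥ (Uᵀ * A * U) *ᵥ x := by
      rw [toQuadraticForm'_apply, ← mulVec_mulVec, ← mulVec_mulVec, dotProduct_mulVec x,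
        vecMul_transpose]
    _ = QuadraticMap.weightedSumSquares ℝ hA.eigenvalues x := by
      simp [hdiag, dotProduct, mulVec_diagonal, mul_left_comm]

lemma sigPos_toQuadraticForm'_eq_card_eigenvalues_pos {A : Matrix ι ι ℝ} (hA : A.IsHermitian) :
    sigPos A.toQuadraticForm' = (Finset.univ.filter fun i ↦ 0 < hA.eigenvalues i).card := by
  rw [QuadraticForm.sigPos_of_equiv_weightedSumSquares
    (equivalent_weightedSumSquares_eigenvalues hA), ← Set.ncard_coe_finset, Finset.coe_filter_univ]

end QuadraticFormOfMatrix

lemma posInertia_eq_sigPos {n : ℕ} (G : SimpleGraph (Fin n)) [DecidableRel G.Adj] :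
    G.posInertia = sigPos (G.adjMatrix ℝ).toQuadraticForm' := by
  rw [sigPos_toQuadraticForm'_eq_card_eigenvalues_pos G.adjMatrix_isHermitian,
    SimpleGraph.posInertia]
  congr!

section AdjMatrix

variable {V : Type*} [Fintype V] [DecidableEq V] (G : SimpleGraph V) [DecidableRel G.Adj]

lemma toQuadraticForm'_adjMatrix_apply_add_compl_apply {R : Type*} [CommRing R] (x : V → R) :
    (G.adjMatrix R).toQuadraticForm' x + (Gᶜ.adjMatrix R).toQuadraticForm' x
      = (∑ i, x i) ^ 2 - ∑ i, x i ^ 2 := by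
  have hsum : G.adjMatrix R + Gᶜ.adjMatrix R = of 1 - 1 := by
    rw [SimpleGraph.IsCompl.adjMatrix_add_adjMatrix_eq_adjMatrix_completeGraph R isCompl_compl,
      SimpleGraph.adjMatrix_completeGraph_eq_of_one_sub_one]
  calc
    _ = x ⬝ᵥ (of 1 - 1 : Matrix V V R) *ᵥ x := by
      rw [toQuadraticForm'_apply, toQuadraticForm'_apply, ← dotProduct_add, ← add_mulVec, hsum]
    _ = (∑ i, x i) ^ 2 - ∑ i, x i ^ 2 := by
      rw [sub_mulVec, one_mulVec, dotProduct_sub]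
      simp [dotProduct, mulVec, pow_two, Finset.sum_mul]

variable (K : Type*) [Field K] [LinearOrder K] [IsStrictOrderedRing K]

lemma sigPos_adjMatrix_add_compl_le_one :
    sigPos ((G.adjMatrix K).toQuadraticForm' + (Gᶜ.adjMatrix K).toQuadraticForm') ≤ 1 := by
  let sum : (V → K) →ₗ[K] K := ∑ i, LinearMap.proj i
  calc
    _ ≤ Module.finrank K sum.range :=
      sigPos_le_finrank_range_of_nonpos_on_ker sum fun x hx ↦ by
        have hx0 : ∑ i, x i = 0 := by simpa [sum] using hx
        simpa [toQuadraticForm'_adjMatrix_apply_add_compl_apply, hx0] using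
          Finset.sum_nonneg fun i _ ↦ sq_nonneg (x i)
    _ ≤ Module.finrank K K := Submodule.finrank_le _
    _ = 1 := Module.finrank_self K

theorem posInertia_add_compl_le_general :
    sigPos (G.adjMatrix K).toQuadraticForm' + sigPos (Gᶜ.adjMatrix K).toQuadraticForm'
      ≤ Fintype.card V + 1 := by
  calc
    _ ≤ Module.finrank K (V → K) +
          sigPos ((G.adjMatrix K).toQuadraticForm' + (Gᶜ.adjMatrix K).toQuadraticForm') :=
      sigPos_add_sigPos_le_finrank_add_sigPos_add _ _
    _ ≤ Fintype.card V + 1 := by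
      rw [Module.finrank_fintype_fun_eq_card]
      gcongr
      exact sigPos_adjMatrix_add_compl_le_one G K

end AdjMatrix

/-- **Nordhaus–Gaddum for `n⁺`.** For any graph `G` on `n` vertices,
`n⁺(G) + n⁺(Ḡ) ≤ n + 1`. -/
theorem posInertia_add_compl_le {n : ℕ} (G : SimpleGraph (Fin n)) :
    G.posInertia + Gᶜ.posInertia ≤ n + 1 := by
  classical
  simpa [posInertia_eq_sigPos] using posInertia_add_compl_le_general G ℝ
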